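/- Let F : S → G(S) be a Markov chain on a measurable space S and let A, B ⊆ S be measurable. Define K_P on the ω-cpo of measurable functions from S to probability distributions on ℕ∪{∞} (ordered pointwise by the stochastic order) by (K_P r)(x) = 1 ⊕ (X r)(x) if x ∈ A∖B, (K_P r)(x) = δ₀ if x ∈ B, and (K_P r)(x) = (X r)(x) otherwise. Then the least fixed point μK_P satisfies ℙ_{s₀}[step_{s₀}^{(A,B)} = m] = (μK_P)(s₀)({m}) for every s₀ ∈ S and every m ∈ ℕ∪{∞}. -/

import Mathlib

open MeasureTheory ProbabilityTheory Set
open scoped ENNReal NNReal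

variable {S : Type*} [MeasurableSpace S]

/-- Prepend an initial state to a trace. -/
def prep (s₀ : S) (ω : ℕ → S) : ℕ → S := fun n => Nat.rec s₀ (fun k _ => ω k) n

/-- `stepCount A B s₀ ω` is the number of indices `i` with
`0 ≤ i < min {j | s_j ∈ B}` and `s_i ∈ A`, where `s₀ s₁ s₂ ⋯` is the trace `ω`
prefixed with the initial state `s₀`. -/
noncomputable def stepCount (A B : Set S) (s₀ : S) (ω : ℕ → S) : ℕ∞ :=
  {i : ℕ | prep s₀ ω i ∈ A ∧ ∀ j ≤ i, prep s₀ ω j ∉ B}.encard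

/-- The stochastic order on distributions over `ℕ∞`:
`ζ₁ ≤ ζ₂` iff `ζ₁([a,∞]) ≤ ζ₂([a,∞])` for all `a ∈ ℕ`. -/
def stochLE (ζ₁ ζ₂ : Measure ℕ∞) : Prop :=
  ∀ a : ℕ, ζ₁ (Ici (a : ℕ∞)) ≤ ζ₂ (Ici (a : ℕ∞))

/-- The next-time operator on distribution-valued functions:
`(𝕏 r)(s)(E) = ∫ r(s')(E) dF(s)(s')`. -/
noncomputable def nextTimeD (F : Kernel S S) (r : S → Measure ℕ∞) : S → Measure ℕ∞ :=
  fun s => (F s : Measure S).bind r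

/-- The shift `1 ⊕ ζ` of a distribution on `ℕ∞`. -/
noncomputable def shift1 (ζ : Measure ℕ∞) : Measure ℕ∞ := ζ.map (· + 1)

open scoped Classical in
/-- The monotone function `K_P` on distribution-valued functions, whose least fixed
point is the distribution of the number of `A`-steps until reaching `B`. -/
noncomputable def KP (F : Kernel S S) (A B : Set S) (r : S → Measure ℕ∞) : S → Measure ℕ∞ :=
  fun x =>
    if x ∈ B then Measure.dirac 0
    else if x ∈ A then shift1 (nextTimeD F r x)
    else nextTimeD F r x

theorem prep_measurable : Measurable (fun p : S × (ℕ → S) => prep p.1 p.2) := by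
  refine measurable_pi_lambda _ fun n => ?_
  cases n with
  | zero => exact measurable_fst
  | succ k => exact (measurable_pi_apply k).comp measurable_snd

/-- truncated count -/
noncomputable def cnt (A B : Set S) (n : ℕ∞) (τ : ℕ → S) : ℕ∞ :=
  {i : ℕ | (i : ℕ∞) < n ∧ τ i ∈ A ∧ ∀ j ≤ i, τ j ∉ B}.encard

omit [MeasurableSpace S] in
theorem cnt_zero (A B : Set S) (τ : ℕ → S) : cnt A B 0 τ = 0 := by
  simp [cnt]

open scoped Classical in
omit [MeasurableSpace S] in
theorem cnt_succ (A B : Set S) (n : ℕ∞) (s : S) (τ : ℕ → S) :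
    cnt A B (n + 1) (prep s τ) =
      if s ∈ B then 0 else if s ∈ A then cnt A B n τ + 1 else cnt A B n τ := by
  have h0 : prep s τ 0 = s := rfl
  have hs : ∀ i, prep s τ (i + 1) = τ i := fun _ => rfl
  have hlt : ∀ i : ℕ, ((i + 1 : ℕ) : ℕ∞) < n + 1 ↔ (i : ℕ∞) < n := by
    intro i
    cases n with
    | top => exact iff_of_true (ENat.coe_lt_top _) (ENat.coe_lt_top _)
    | coe n => norm_cast; omega
  have hall : ∀ i : ℕ, (∀ j ≤ i + 1, prep s τ j ∉ B) ↔ (s ∉ B ∧ ∀ j ≤ i, τ j ∉ B) := by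
    intro i
    constructor
    · intro h
      exact ⟨h 0 (by omega), fun j hj => h (j + 1) (by omega)⟩
    · rintro ⟨h, h'⟩ j hj
      cases j with
      | zero => exact h
      | succ j => exact h' j (by omega)
  have hinj : Function.Injective Nat.succ := Nat.succ_injective
  split_ifs with hB hA
  · unfold cnt
    rw [Set.encard_eq_zero, Set.eq_empty_iff_forall_notMem]
    rintro i ⟨-, -, h⟩
    exact h 0 (by omega) hB
  · unfold cnt
    rw [← hinj.encard_image {i : ℕ | (i : ℕ∞) < n ∧ τ i ∈ A ∧ ∀ j ≤ i, τ j ∉ B},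
      ← Set.encard_insert_of_notMem (a := 0) (by simp)]
    congr 1
    ext i
    cases i with
    | zero => simp [h0, hA, hB]
    | succ i =>
      simp only [mem_ofPred_eq, hlt, hs, hall, hB, mem_insert_iff]
      simp
  · unfold cnt
    rw [← hinj.encard_image {i : ℕ | (i : ℕ∞) < n ∧ τ i ∈ A ∧ ∀ j ≤ i, τ j ∉ B}]
    congr 1
    ext i
    cases i with
    | zero => simp [h0, hA]
    | succ i =>
      simp only [mem_ofPred_eq, hlt, hs, hall, hB]
      simp

theorem cnt_measurable_nat (A B : Set S) (hA : MeasurableSet A) (hB : MeasurableSet B) (n : ℕ) :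
    Measurable (cnt A B (n : ℕ∞)) := by
  classical
  induction n with
  | zero =>
    have : cnt A B ((0 : ℕ) : ℕ∞) = fun _ => 0 := by
      funext τ; simpa using cnt_zero A B τ
    rw [this]; exact measurable_const
  | succ n ih =>
    have : cnt A B ((n + 1 : ℕ) : ℕ∞) = fun τ => if τ 0 ∈ B then 0 else
        if τ 0 ∈ A then cnt A B n (fun i => τ (i + 1)) + 1
          else cnt A B n (fun i => τ (i + 1)) := by
      funext τ
      rw [← cnt_succ]
      push_cast
      congr 1
      funext i
      cases i <;> rfl
    rw [this]
    have hsh : Measurable (fun (τ : ℕ → S) i => τ (i + 1)) :=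
      measurable_pi_lambda _ fun i => measurable_pi_apply _
    have hc := ih.comp hsh
    exact Measurable.ite ((measurable_pi_apply 0) hB) measurable_const
      (Measurable.ite ((measurable_pi_apply 0) hA)
        ((Measurable.of_discrete (f := fun x : ℕ∞ => x + 1)).comp hc) hc)

omit [MeasurableSpace S] in
theorem cnt_mono (A B : Set S) (τ : ℕ → S) {m n : ℕ∞} (h : m ≤ n) :
    cnt A B m τ ≤ cnt A B n τ :=
  Set.encard_le_encard fun _ hi => ⟨hi.1.trans_le h, hi.2⟩

omit [MeasurableSpace S] in
theorem le_cnt_top (A B : Set S) (τ : ℕ → S) (a : ℕ) :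
    (a : ℕ∞) ≤ cnt A B ⊤ τ ↔ ∃ n : ℕ, (a : ℕ∞) ≤ cnt A B n τ := by
  constructor
  · intro h
    obtain ⟨t, ht, hc⟩ := Set.exists_subset_encard_eq h
    have hf : t.Finite := Set.finite_of_encard_eq_coe hc
    obtain ⟨N, hN⟩ := hf.bddAbove
    refine ⟨N + 1, ?_⟩
    rw [← hc]
    refine Set.encard_le_encard fun i hi => ⟨?_, (ht hi).2⟩
    have := hN hi
    norm_cast
    omega
  · rintro ⟨n, hn⟩
    exact hn.trans (cnt_mono A B τ le_top)

omit [MeasurableSpace S] in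
theorem preimage_top (A B : Set S) (a : ℕ) :
    cnt A B ⊤ ⁻¹' Ici (a : ℕ∞) = ⋃ n : ℕ, cnt A B n ⁻¹' Ici (a : ℕ∞) := by
  ext τ; simp [le_cnt_top]

theorem cnt_measurable_top (A B : Set S) (hA : MeasurableSet A) (hB : MeasurableSet B) :
    Measurable (cnt A B ⊤) := by
  have key : ∀ a : ℕ, MeasurableSet (cnt A B ⊤ ⁻¹' Ici (a : ℕ∞)) := fun a => by
    rw [preimage_top]
    exact MeasurableSet.iUnion fun n => cnt_measurable_nat A B hA hB n .of_discrete
  have hfin : ∀ a : ℕ, MeasurableSet (cnt A B ⊤ ⁻¹' {(a : ℕ∞)}) := fun a => by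
    have : ({(a : ℕ∞)} : Set ℕ∞) = Ici (a : ℕ∞) \ Ici ((a + 1 : ℕ) : ℕ∞) := by
      ext x
      cases x with
      | top => simp
      | coe x => simp only [mem_singleton_iff, mem_sdiff, mem_Ici]; norm_cast; omega
    rw [this, preimage_sdiff]
    exact (key a).diff (key _)
  refine measurable_to_countable' fun x => ?_
  cases x with
  | coe a => exact hfin a
  | top =>
    have : ({⊤} : Set ℕ∞) = (⋃ a : ℕ, {(a : ℕ∞)})ᶜ := by
      ext x
      cases x <;> simp
    rw [this, preimage_compl, preimage_iUnion]
    exact (MeasurableSet.iUnion hfin).compl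

theorem map_bind' {α β γ : Type*} [MeasurableSpace α] [MeasurableSpace β] [MeasurableSpace γ]
    (μ : Measure α) (k : α → Measure β) (hk : Measurable k) (f : β → γ) (hf : Measurable f) :
    (μ.bind k).map f = μ.bind (fun a => (k a).map f) := by
  ext s hs
  rw [Measure.map_apply hf hs, Measure.bind_apply (hf hs) hk.aemeasurable,
    Measure.bind_apply hs
      (show Measurable (fun a => (k a).map f) from
        (Measure.measurable_map f hf).comp hk).aemeasurable]
  simp only [Measure.map_apply hf hs]

theorem trace_measurable (P : Kernel S (ℕ → S)) [IsMarkovKernel P] :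
    Measurable (fun s => (P s).map (prep s)) := by
  have : (fun s => (P s).map (prep s)) =
      fun s => ((Kernel.id ×ₖ P).map (fun p : S × (ℕ → S) => prep p.1 p.2)) s := by
    funext s
    rw [Kernel.map_apply _ prep_measurable, Kernel.prod_apply, Kernel.id_apply,
      Measure.dirac_prod, Measure.map_map prep_measurable measurable_prodMk_left]
    rfl
  rw [this]
  exact Kernel.measurable _

/-- distribution of the truncated count -/
noncomputable def DD (P : Kernel S (ℕ → S)) (A B : Set S) (n : ℕ∞) (s : S) : Measure ℕ∞ :=
  ((P s).map (prep s)).map (cnt A B n)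

theorem prep_meas_right (s : S) : Measurable (prep s) :=
  prep_measurable.comp measurable_prodMk_left

theorem DD_measurable (P : Kernel S (ℕ → S)) [IsMarkovKernel P] (A B : Set S) (n : ℕ∞)
    (hn : Measurable (cnt A B n)) : Measurable (DD P A B n) :=
  (Measure.measurable_map _ hn).comp (trace_measurable P)

theorem DD_succ (F : Kernel S S)
    (P : Kernel S (ℕ → S)) [IsMarkovKernel P]
    (hP : ∀ s₀ : S, (P s₀ : Measure (ℕ → S)) = (F s₀).bind fun s₁ => (P s₁).map (prep s₁))
    (A B : Set S) (n : ℕ∞) (hn : Measurable (cnt A B n)) (hn' : Measurable (cnt A B (n + 1))) :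
    DD P A B (n + 1) = KP F A B (DD P A B n) := by
  classical
  funext s
  have hX : nextTimeD F (DD P A B n) s = (P s).map (cnt A B n) := by
    rw [hP s, map_bind' _ _ (trace_measurable P) _ hn]
    rfl
  have h1 : DD P A B (n + 1) s = (P s).map (fun τ => cnt A B (n + 1) (prep s τ)) := by
    rw [DD, Measure.map_map hn' (prep_meas_right s)]; rfl
  simp only [h1, KP, hX, cnt_succ]
  split_ifs with hB hA
  · simp
  · rw [shift1, Measure.map_map .of_discrete hn]; rfl
  · rfl

theorem stochLE_KP (F : Kernel S S) (A B : Set S) (r r' : S → Measure ℕ∞)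
    [IsMarkovKernel F] (hp : ∀ s, IsProbabilityMeasure (r s))
    (hp' : ∀ s, IsProbabilityMeasure (r' s))
    (hr : Measurable r) (hr' : Measurable r') (h : ∀ s, stochLE (r s) (r' s)) (s : S) :
    stochLE (KP F A B r s) (KP F A B r' s) := by
  classical
  have hX : stochLE (nextTimeD F r s) (nextTimeD F r' s) := by
    intro a
    unfold nextTimeD
    rw [Measure.bind_apply .of_discrete hr.aemeasurable,
      Measure.bind_apply .of_discrete hr'.aemeasurable]
    exact lintegral_mono fun x => h x a
  unfold KP
  split_ifs with hB hA
  · exact fun a => le_rfl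
  · intro a
    unfold shift1
    rw [Measure.map_apply .of_discrete .of_discrete, Measure.map_apply .of_discrete .of_discrete]
    have : (fun x : ℕ∞ => x + 1) ⁻¹' Ici (a : ℕ∞) = Ici ((a - 1 : ℕ) : ℕ∞) := by
      ext x
      cases x with
      | top => simp
      | coe x => simp only [mem_preimage, mem_Ici]; norm_cast; omega
    rw [this]
    exact hX _
  · exact hX

theorem lfp_KP_eq_step_distribution
    (F : Kernel S S) [IsMarkovKernel F]
    (P : Kernel S (ℕ → S)) [IsMarkovKernel P]
    (hP : ∀ s₀ : S, (P s₀ : Measure (ℕ → S)) = (F s₀).bind fun s₁ => (P s₁).map (prep s₁))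
    (A B : Set S) (hA : MeasurableSet A) (hB : MeasurableSet B) :
    ∃ μK : S → Measure ℕ∞,
      (∀ s, IsProbabilityMeasure (μK s)) ∧ Measurable μK ∧
      KP F A B μK = μK ∧
      (∀ r : S → Measure ℕ∞, (∀ s, IsProbabilityMeasure (r s)) → Measurable r →
        KP F A B r = r → ∀ s, stochLE (μK s) (r s)) ∧
      ∀ (s₀ : S) (m : ℕ∞), P s₀ {ω | stepCount A B s₀ ω = m} = μK s₀ {m} := by
  have mN := cnt_measurable_nat A B hA hB
  have mT := cnt_measurable_top A B hA hB
  have hprob : ∀ n, Measurable (cnt A B n) → ∀ s, IsProbabilityMeasure (DD P A B n s) := by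
    intro n hn s
    have : IsProbabilityMeasure ((P s).map (prep s)) :=
      Measure.isProbabilityMeasure_map (prep_meas_right s).aemeasurable
    exact Measure.isProbabilityMeasure_map hn.aemeasurable
  refine ⟨DD P A B ⊤, hprob _ mT, DD_measurable P A B ⊤ mT, ?_, ?_, ?_⟩
  · have := DD_succ F P hP A B ⊤ mT (by simpa using mT)
    rw [← this]; simp
  · intro r hp hr hfix s a
    have hn : ∀ n : ℕ, ∀ s, stochLE (DD P A B n s) (r s) := by
      intro n
      induction n with
      | zero =>
        intro s a
        have h0 : cnt A B ((0 : ℕ) : ℕ∞) = fun _ => 0 := by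
          funext τ; simpa using cnt_zero A B τ
        have := hprob _ (mN 0) s
        have := hp s
        rcases Nat.eq_zero_or_pos a with rfl | ha
        · have : Ici (((0 : ℕ) : ℕ∞)) = univ := by ext x; simp
          rw [this, measure_univ, measure_univ]
        · rw [DD, Measure.map_apply (mN 0) .of_discrete, h0]
          have : (fun _ : ℕ → S => (0 : ℕ∞)) ⁻¹' Ici (a : ℕ∞) = ∅ := by
            ext x; simp; omega
          rw [this]; simp
      | succ n ih =>
        intro s
        have := DD_succ F P hP A B n (mN n) (by exact_mod_cast mN (n + 1))
        push_cast
        rw [this, ← hfix]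
        exact stochLE_KP F A B _ _ (hprob _ (mN n)) hp (DD_measurable P A B n (mN n)) hr ih s
    rw [DD, Measure.map_apply mT .of_discrete, preimage_top, Monotone.measure_iUnion]
    · refine iSup_le fun n => ?_
      rw [← Measure.map_apply (mN n) .of_discrete]
      exact hn n s a
    · intro m n hmn τ hτ
      exact le_trans (show _ ≤ _ from hτ) (cnt_mono A B τ (by exact_mod_cast hmn))
  · intro s m
    rw [DD, Measure.map_map mT (prep_meas_right s),
      Measure.map_apply (mT.comp (prep_meas_right s)) .of_discrete]
    congr 1
    ext ω
    simp [stepCount, cnt]
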